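/- Let P be the R-measure and let α be an optimal set of n-means for P with n ≥ 3. Then α ∩ △_i ≠ ∅ for every i ∈ {1, 2, 3}, where △_i = S_i(△) and △ is the closed triangle with vertices (0,0), (1,0), (1/2, √3/2) (the convex hull of these three points). -/

import Mathlib

open MeasureTheory ENNReal

noncomputable section

abbrev E2 : Type := EuclideanSpace ℝ (Fin 2)

/-- The point (a, b) of the Euclidean plane. -/
def pt (a b : ℝ) : E2 := (WithLp.equiv 2 (Fin 2 → ℝ)).symm ![a, b]

/-- S₁(x) = x/3. -/
def S1 : E2 → E2 := fun x => (3 : ℝ)⁻¹ • x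

/-- S₂(x) = x/3 + (2/3, 0). -/
def S2 : E2 → E2 := fun x => (3 : ℝ)⁻¹ • x + pt (2/3) 0

/-- S₃(x) = x/3 + (1/3, √3/3). -/
def S3 : E2 → E2 := fun x => (3 : ℝ)⁻¹ • x + pt (1/3) (Real.sqrt 3 / 3)

def Smap : Fin 3 → E2 → E2 := ![S1, S2, S3]

/-- For a word ω = ω₁⋯ω_k ∈ {1,2,3}^k, the composition S_ω = S_{ω₁} ∘ ⋯ ∘ S_{ω_k}. -/
def Sword {k : ℕ} (ω : Fin k → Fin 3) : E2 → E2 :=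
  fun x => (List.ofFn fun i => Smap (ω i)).foldr (fun g y => g y) x

/-- The closed triangle with vertices (0,0), (1,0), (1/2, √3/2). -/
def Tri : Set E2 := convexHull ℝ {pt 0 0, pt 1 0, pt (1/2) (Real.sqrt 3 / 2)}

/-- The distortion error ∫ min_{a ∈ α} ‖x − a‖² dμ of a set α of points. -/
def err (μ : Measure E2) (α : Set E2) : ℝ≥0∞ :=
  ∫⁻ x, ⨅ a ∈ α, ENNReal.ofReal (‖x - a‖ ^ 2) ∂μ

/-- The n-th quantization error V_n(μ). -/
def quantErr (μ : Measure E2) (n : ℕ) : ℝ≥0∞ :=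
  ⨅ (α : Set E2) (_ : α.Finite ∧ α.ncard ≤ n), err μ α

/-- α is an optimal set of n-means for μ. -/
def IsOptimal (μ : Measure E2) (n : ℕ) (α : Set E2) : Prop :=
  α.Finite ∧ α.ncard ≤ n ∧ err μ α = quantErr μ n

/-!
An optimal set `α` lies in the triangle up to points that serve no mass, since projecting to the
triangle can only help. Suppose that `α` misses `Smap i '' Tri`, i.e. that the barycentric
coordinate `i` is at most `2 / 3` on `α`. By self-similarity the distortion of `α` is `1 / 27` times
the sum over `j` of the distortions of the magnified sets `Smap j ⁻¹' α`, and a centre with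
`j`-th coordinate at most `1 / 2` is far from all of the piece `j`. The points of `α` with `j`-th
coordinate above `1 / 2` form disjoint caps. If one of the caps is empty, then `α` is worse than
three points. Otherwise replace each cap by a good quantizer of its piece with at most as many
points. This may lose a little in the other two pieces because the points outside the caps are
dropped, but the piece `i`, all of whose centres were badly placed, gains more. The result has at
most `n` points and smaller distortion, contradicting optimality.
-/

/-! ### Finite quantizers in metric spaces -/

section Quantization

open Metric

variable {X : Type*} [PseudoMetricSpace X]

lemma infDist_sq_le_dist_sq {s : Set X} {a : X} (ha : a ∈ s) (x : X) :
    infDist x s ^ 2 ≤ dist x a ^ 2 :=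
  pow_le_pow_left₀ infDist_nonneg (infDist_le_dist_of_mem ha) 2

lemma continuous_infDist_sq (s : Set X) : Continuous fun x ↦ infDist x s ^ 2 :=
  (continuous_infDist_pt s).pow 2

lemma infDist_apply_eq_mul_infDist_preimage {Y : Type*} [PseudoMetricSpace Y] {f : X → Y}
    (hf : Function.Surjective f) {r : ℝ} (hr : 0 < r)
    (hdist : ∀ x y, dist (f x) (f y) = r * dist x y) {s : Set Y} (hs : s.Nonempty) (x : X) :
    infDist (f x) s = r * infDist x (f ⁻¹' s) := by
  apply le_antisymm
  · rw [← div_le_iff₀' hr, le_infDist (hs.preimage hf)]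
    intro z hz
    rw [div_le_iff₀' hr, ← hdist]
    exact infDist_le_dist_of_mem hz
  · rw [le_infDist hs]
    intro y hy
    obtain ⟨z, rfl⟩ := hf y
    rw [hdist]
    exact mul_le_mul_of_nonneg_left (infDist_le_dist_of_mem hy) hr.le

variable [MeasurableSpace X]

/-- The mean squared distance `∫ min_{a ∈ s} d(x, a)² dμ` to the set `s`, as a real number. It is
the real counterpart of `err`, meaningful for nonempty `s` only: `infDist x ∅ = 0`. -/
def distortion (μ : Measure X) (s : Set X) : ℝ :=
  ∫ x, infDist x s ^ 2 ∂μ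

/-- Some nonempty set of at most `k` points has distortion at most `v`. -/
def HasQuantizer (μ : Measure X) (k : ℕ) (v : ℝ) : Prop :=
  ∃ s : Set X, s.Finite ∧ s.Nonempty ∧ s.ncard ≤ k ∧ distortion μ s ≤ v

lemma distortion_nonneg (μ : Measure X) (s : Set X) : 0 ≤ distortion μ s :=
  integral_nonneg fun _ ↦ sq_nonneg _

lemma HasQuantizer.mono {μ : Measure X} {k l : ℕ} {v w : ℝ} (h : HasQuantizer μ k v)
    (hkl : k ≤ l) (hvw : v ≤ w) : HasQuantizer μ l w := by
  obtain ⟨s, hfin, hne, hcard, hs⟩ := h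
  exact ⟨s, hfin, hne, hcard.trans hkl, hs.trans hvw⟩

lemma integrable_of_continuous_of_ae_mem_isCompact {Y : Type*} [TopologicalSpace Y] [T2Space Y]
    [MeasurableSpace Y] [OpensMeasurableSpace Y] {μ : Measure Y} [IsFiniteMeasureOnCompacts μ]
    {K : Set Y} (hK : IsCompact K) (hμ : ∀ᵐ x ∂μ, x ∈ K) {f : Y → ℝ} (hf : Continuous f) :
    Integrable f μ := by
  rw [← Measure.restrict_eq_self_of_ae_mem hμ]
  exact hf.continuousOn.integrableOn_compact hK

variable {E : Type*} [NormedAddCommGroup E] [InnerProductSpace ℝ E] {K : Set E}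

lemma exists_mem_forall_dist_sq_add_dist_sq_le (hne : K.Nonempty) (hK : IsComplete K)
    (hconv : Convex ℝ K) (a : E) :
    ∃ p ∈ K, ∀ x ∈ K, dist x p ^ 2 + dist a p ^ 2 ≤ dist x a ^ 2 := by
  obtain ⟨p, hp, hmin⟩ := exists_norm_eq_iInf_of_complete_convex hne hK hconv a
  refine ⟨p, hp, fun x hx ↦ ?_⟩
  have hobtuse := (norm_eq_iInf_iff_real_inner_le_zero hconv hp).1 hmin x hx
  simp only [dist_eq_norm]
  rw [← sub_sub_sub_cancel_right x a p, norm_sub_sq_real (x - p), real_inner_comm]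
  linarith

variable [MeasurableSpace E] [OpensMeasurableSpace E] {μ : Measure E}
  [IsFiniteMeasureOnCompacts μ] [NeZero μ] (hK : IsCompact K) (hconv : Convex ℝ K)
  (hμ : ∀ᵐ x ∂μ, x ∈ K) {n : ℕ} {s : Set E} (hfin : s.Finite) (hne : s.Nonempty)
  (hcard : s.ncard ≤ n) (hopt : ∀ v, HasQuantizer μ n v → distortion μ s ≤ v)

include hK hconv hμ hfin hne hcard hopt

/-- Replacing each point of an optimal `s` by its projection to `K` strictly decreases the distance
from `x ∈ K` to `s` whenever the nearest point lies outside `K`. -/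
lemma ae_exists_mem_inter_infDist_eq_dist : ∀ᵐ x ∂μ, ∃ a ∈ s ∩ K, infDist x s = dist x a := by
  have hint (t : Set E) : Integrable (fun x ↦ infDist x t ^ 2) μ :=
    integrable_of_continuous_of_ae_mem_isCompact hK hμ (continuous_infDist_sq t)
  choose proj hproj_mem hproj using
    exists_mem_forall_dist_sq_add_dist_sq_le hμ.exists hK.isComplete hconv
  have hproj_le {x a : E} (hx : x ∈ K) (ha : a ∈ s) :
      infDist x (proj '' s) ^ 2 + dist a (proj a) ^ 2 ≤ dist x a ^ 2 :=
    (add_le_add_left (infDist_sq_le_dist_sq (Set.mem_image_of_mem proj ha) x) _).trans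
      (hproj a x hx)
  have hle : (fun x ↦ infDist x (proj '' s) ^ 2) ≤ᵐ[μ] fun x ↦ infDist x s ^ 2 := by
    filter_upwards [hμ] with x hx
    obtain ⟨a, ha, hxa⟩ := hfin.isCompact.exists_infDist_eq_dist hne x
    rw [hxa]
    exact le_of_add_le_of_nonneg_left (hproj_le hx ha) (sq_nonneg _)
  have hdist : distortion μ s = distortion μ (proj '' s) :=
    le_antisymm
      (hopt _ ⟨_, hfin.image _, hne.image _, (Set.ncard_image_le hfin).trans hcard, le_rfl⟩)
      (integral_mono_ae (hint _) (hint _) hle)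
  filter_upwards [hμ, (integral_eq_iff_of_ae_le (hint _) (hint _) hle).1 hdist.symm] with x hx hxs
  obtain ⟨a, ha, hxa⟩ := hfin.isCompact.exists_infDist_eq_dist hne x
  have hproj_eq : a = proj a := by
    have hsq := hproj_le hx ha
    rw [hxs, hxa] at hsq
    exact dist_eq_zero.1 (pow_eq_zero_iff two_ne_zero |>.1
      (le_antisymm (by linarith) (sq_nonneg _)))
  exact ⟨a, ⟨ha, hproj_eq ▸ hproj_mem a⟩, hxa⟩

lemma nonempty_inter_and_distortion_inter_le :
    (s ∩ K).Nonempty ∧ distortion μ (s ∩ K) ≤ distortion μ s := by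
  have hnearest := ae_exists_mem_inter_infDist_eq_dist hK hconv hμ hfin hne hcard hopt
  have hint (t : Set E) : Integrable (fun x ↦ infDist x t ^ 2) μ :=
    integrable_of_continuous_of_ae_mem_isCompact hK hμ (continuous_infDist_sq t)
  obtain ⟨-, a, ha, -⟩ := hnearest.exists
  refine ⟨⟨a, ha⟩, integral_mono_ae (hint _) (hint _) ?_⟩
  filter_upwards [hnearest] with x ⟨b, hb, hxb⟩
  rw [hxb]
  exact infDist_sq_le_dist_sq hb x

end Quantization

section FiniteSums

lemma card_mul_sq_le_of_sum_eq_zero {ι : Type*} [Fintype ι] {d : ι → ℝ} (hd : ∑ j, d j = 0)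
    (i : ι) : (Fintype.card ι : ℝ) * d i ^ 2 ≤ (Fintype.card ι - 1) * ∑ j, d j ^ 2 := by
  classical
  have hcs := sq_sum_le_card_mul_sum_sq (s := Finset.univ.erase i) (f := d)
  have hcard : ((Finset.univ.erase i).card : ℝ) = Fintype.card ι - 1 := by
    rw [Finset.card_erase_of_mem (Finset.mem_univ i), Finset.card_univ,
      Nat.cast_pred (Fintype.card_pos_iff.2 ⟨i⟩)]
  have hrest : ∑ j ∈ Finset.univ.erase i, d j = -d i := by
    rw [Finset.sum_erase_eq_sub (Finset.mem_univ i), hd, zero_sub]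
  rw [hcard, hrest, Finset.sum_erase_eq_sub (Finset.mem_univ i)] at hcs
  linarith

lemma exists_ne_ne_sum_eq {M : Type*} [AddCommMonoid M] (i : Fin 3) :
    ∃ j k, i ≠ j ∧ i ≠ k ∧ ∀ f : Fin 3 → M, ∑ l, f l = f i + f j + f k := by
  refine ⟨i + 1, i + 2, by fin_cases i <;> decide, by fin_cases i <;> decide, fun f ↦ ?_⟩
  rw [← Equiv.sum_comp (Equiv.addLeft i), Fin.sum_univ_three]
  simp

end FiniteSums

section Support

open Filter Topology

lemma ae_nonneg_of_measure_lt_le_measure_lt_mul {Ω : Type*} [MeasurableSpace Ω] {μ : Measure Ω}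
    [IsFiniteMeasure μ] {f : Ω → ℝ} (hf : Measurable f) {c : ℝ} (hc : 1 < c)
    (h : ∀ t < 0, μ {x | f x < t} ≤ μ {x | f x < c * t}) : ∀ᵐ x ∂μ, 0 ≤ f x := by
  have hpow (k : ℕ) : ∀ t < 0, μ {x | f x < t} ≤ μ {x | f x < c ^ k * t} := by
    induction k with
    | zero => simp
    | succ k ih =>
      intro t ht
      rw [pow_succ, mul_assoc]
      exact (h t ht).trans (ih (c * t) (mul_neg_of_pos_of_neg (by linarith) ht))
  have hzero (t : ℝ) (ht : t < 0) : μ {x | f x < t} = 0 := by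
    have hpow_tendsto : Tendsto (fun k : ℕ ↦ c ^ k * t) atTop atBot :=
      (tendsto_pow_atTop_atTop_of_one_lt hc).atTop_mul_const_of_neg ht
    have htail : Tendsto (fun k : ℕ ↦ μ {x | f x < c ^ k * t}) atTop
        (𝓝 (μ (⋂ k : ℕ, {x | f x < c ^ k * t}))) := by
      have hanti : Antitone fun k : ℕ ↦ {x | f x < c ^ k * t} := fun k l hkl x hx ↦
        lt_of_lt_of_le hx (mul_le_mul_of_nonpos_right (pow_le_pow_right₀ hc.le hkl) ht.le)
      exact tendsto_measure_iInter_atTop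
        (fun k ↦ (measurableSet_lt hf measurable_const).nullMeasurableSet) hanti
        ⟨0, measure_ne_top _ _⟩
    have hempty : ⋂ k : ℕ, {x | f x < c ^ k * t} = ∅ := by
      refine Set.eq_empty_of_forall_notMem fun x hx ↦ ?_
      obtain ⟨k, hk⟩ := (hpow_tendsto.eventually_le_atBot (f x)).exists
      exact (Set.mem_iInter.1 hx k).not_ge hk
    rw [hempty, measure_empty] at htail
    exact le_antisymm (ge_of_tendsto' htail fun k ↦ hpow k t ht) bot_le
  have hbound : ∀ᵐ x ∂μ, ∀ k : ℕ, -(1 / ((k : ℝ) + 1)) ≤ f x := by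
    refine ae_all_iff.2 fun k ↦ ?_
    simpa only [ae_iff, not_le] using hzero _ (neg_neg_of_pos Nat.one_div_pos_of_nat)
  filter_upwards [hbound] with x hx
  simpa using le_of_tendsto' (tendsto_one_div_add_atTop_nhds_zero_nat (𝕜 := ℝ)).neg hx

end Support

/-! ### Barycentric coordinates on the triangle -/

section Triangle

open Metric

/-- The vertices of `Tri`; vertex `i` is the fixed point of `Smap i`. -/
def triVertex : Fin 3 → E2 := ![pt 0 0, pt 1 0, pt (1 / 2) (√3 / 2)]

/-- The barycenter of `Tri`, which is the mean of the R-measure. -/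
def triCenter : E2 := pt (1 / 2) (√3 / 6)

/-- The barycentric coordinates of a point with respect to `triVertex`. -/
def bary (i : Fin 3) (x : E2) : ℝ :=
  ![1 - x 0 - x 1 / √3, x 0 - x 1 / √3, 2 * x 1 / √3] i

lemma sum_bary (x : E2) : ∑ i, bary i x = 1 := by
  simp only [Fin.sum_univ_three, bary, Matrix.cons_val]
  ring

lemma bary_add_smul {a b : ℝ} (hab : a + b = 1) (x y : E2) (i : Fin 3) :
    bary i (a • x + b • y) = a * bary i x + b * bary i y := by
  obtain rfl : a = 1 - b := by linarith
  fin_cases i <;> simp [bary] <;> ring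

lemma bary_triVertex (i j : Fin 3) : bary i (triVertex j) = if i = j then 1 else 0 := by
  fin_cases i <;> fin_cases j <;> simp [bary, triVertex, pt] <;> field_simp <;> norm_num

lemma bary_triCenter (i : Fin 3) : bary i triCenter = 1 / 3 := by
  fin_cases i <;> simp [bary, triCenter, pt] <;> field_simp <;> norm_num

lemma sum_bary_smul_triVertex (x : E2) : ∑ i, bary i x • triVertex i = x := by
  ext k
  fin_cases k <;> simp [Fin.sum_univ_three, bary, triVertex, pt]
  · ring
  · field_simp

lemma continuous_bary (i : Fin 3) : Continuous (bary i) := by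
  unfold bary
  fin_cases i <;> dsimp <;> fun_prop

attribute [fun_prop] continuous_bary

lemma dist_sq_eq_sum_bary (x y : E2) :
    dist x y ^ 2 = (∑ i, (bary i x - bary i y) ^ 2) / 2 := by
  have hsqrt : √3 ^ 2 = 3 := Real.sq_sqrt (by norm_num)
  rw [dist_eq_norm, EuclideanSpace.norm_sq_eq]
  simp [bary, Fin.sum_univ_two, Fin.sum_univ_three]
  field_simp
  ring_nf
  rw [hsqrt]
  ring

/-- `3 / 4` is the square of the height of `Tri`. -/
lemma bary_sub_sq_le_dist_sq (i : Fin 3) (x y : E2) :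
    3 / 4 * (bary i x - bary i y) ^ 2 ≤ dist x y ^ 2 := by
  have hsum : ∑ j, (bary j x - bary j y) = 0 := by
    rw [Finset.sum_sub_distrib, sum_bary, sum_bary, sub_self]
  have hsq := card_mul_sq_le_of_sum_eq_zero hsum i
  rw [Fintype.card_fin] at hsq
  rw [dist_sq_eq_sum_bary]
  push_cast at hsq
  linarith

lemma range_triVertex :
    Set.range triVertex = {pt 0 0, pt 1 0, pt (1 / 2) (√3 / 2)} := by
  simp [triVertex, Matrix.range_cons, Set.insert_def, Set.union_def]

lemma isCompact_Tri : IsCompact Tri := (Set.toFinite _).isCompact_convexHull (𝕜 := ℝ)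

lemma convex_Tri : Convex ℝ Tri := convex_convexHull ℝ _

lemma mem_Tri_iff {x : E2} : x ∈ Tri ↔ ∀ i, 0 ≤ bary i x := by
  rw [Tri, ← range_triVertex]
  constructor
  · intro hx i
    refine convexHull_min (t := {y | 0 ≤ bary i y}) ?_ ?_ hx
    · rintro _ ⟨j, rfl⟩
      rw [Set.mem_ofPred_eq, bary_triVertex]
      positivity
    · intro y hy z hz a b ha hb hab
      simp only [Set.mem_ofPred_eq] at hy hz ⊢
      rw [bary_add_smul hab]
      positivity
  · intro hx
    rw [← sum_bary_smul_triVertex x]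
    exact (convex_convexHull ℝ _).sum_mem (fun i _ ↦ hx i) (sum_bary x)
      fun i _ ↦ subset_convexHull ℝ _ (Set.mem_range_self i)

lemma bary_le_one {x : E2} (hx : x ∈ Tri) (i : Fin 3) : bary i x ≤ 1 := by
  rw [← sum_bary x]
  exact Finset.single_le_sum (fun j _ ↦ mem_Tri_iff.1 hx j) (Finset.mem_univ i)

lemma Smap_eq (i : Fin 3) (x : E2) :
    Smap i x = (1 / 3 : ℝ) • x + (2 / 3 : ℝ) • triVertex i := by
  ext k
  fin_cases i <;> fin_cases k <;> simp [Smap, S1, S2, S3, triVertex, pt]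
  ring

lemma bary_Smap (i j : Fin 3) (x : E2) :
    bary i (Smap j x) = bary i x / 3 + if i = j then 2 / 3 else 0 := by
  rw [Smap_eq, bary_add_smul (by norm_num), bary_triVertex]
  split_ifs <;> ring

lemma bary_div_three_le_bary_Smap (i j : Fin 3) (x : E2) :
    bary i x / 3 ≤ bary i (Smap j x) := by
  rw [bary_Smap]
  exact le_add_of_nonneg_right (by positivity)

lemma continuous_Smap (i : Fin 3) : Continuous (Smap i) := by
  simp_rw [funext (Smap_eq i)]
  fun_prop

attribute [fun_prop] continuous_Smap

lemma dist_Smap (i : Fin 3) (x y : E2) : dist (Smap i x) (Smap i y) = 1 / 3 * dist x y := by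
  rw [Smap_eq, Smap_eq, dist_add_right, dist_smul₀]
  norm_num

lemma dist_sq_Smap_Smap {i j : Fin 3} (hij : i ≠ j) (x : E2) :
    dist (Smap i x) (Smap j x) ^ 2 = 4 / 9 := by
  rw [dist_sq_eq_sum_bary, Fin.sum_univ_three]
  simp only [bary_Smap]
  fin_cases i <;> fin_cases j <;> simp at hij ⊢ <;> norm_num

lemma Smap_bijective (i : Fin 3) : Function.Bijective (Smap i) := by
  refine Function.bijective_iff_has_inverse.2
    ⟨fun y ↦ (3 : ℝ) • y - (2 : ℝ) • triVertex i, fun x ↦ ?_, fun y ↦ ?_⟩ <;>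
  · simp only [Smap_eq]
    module

lemma mem_image_Smap_of_le_bary {i : Fin 3} {x : E2} (hx : x ∈ Tri) (hi : 2 / 3 ≤ bary i x) :
    x ∈ Smap i '' Tri := by
  obtain ⟨y, rfl⟩ := (Smap_bijective i).surjective x
  refine Set.mem_image_of_mem _ (mem_Tri_iff.2 fun j ↦ ?_)
  have hj := mem_Tri_iff.1 hx j
  rw [bary_Smap] at hj hi
  split_ifs at hj with hji
  · subst hji
    simp only [if_true] at hi
    linarith
  · linarith

lemma infDist_Smap_sq (i : Fin 3) {s : Set E2} (hs : s.Nonempty) (x : E2) :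
    infDist (Smap i x) s ^ 2 = infDist x (Smap i ⁻¹' s) ^ 2 / 9 := by
  rw [infDist_apply_eq_mul_infDist_preimage (Smap_bijective i).surjective (by norm_num)
    (dist_Smap i) hs]
  ring

lemma le_dist_sq_add_dist_sq_Smap {j k : Fin 3} (hjk : j ≠ k) (i : Fin 3) (x c : E2) :
    2 / 9 + 3 / 2 * ((bary i (Smap j x) + bary i (Smap k x)) / 2 - bary i c) ^ 2 ≤
      dist (Smap j x) c ^ 2 + dist (Smap k x) c ^ 2 := by
  have hmid : bary i (midpoint ℝ (Smap j x) (Smap k x)) =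
      (bary i (Smap j x) + bary i (Smap k x)) / 2 := by
    rw [midpoint_eq_smul_add, smul_add, bary_add_smul (by norm_num)]
    simp only [invOf_eq_inv]
    ring
  have hheight := bary_sub_sq_le_dist_sq i (midpoint ℝ (Smap j x) (Smap k x)) c
  have hmedian :=
    EuclideanGeometry.dist_sq_add_dist_sq_eq_two_mul_dist_midpoint_sq_add_half_dist_sq
      c (Smap j x) (Smap k x)
  rw [dist_comm c, dist_comm c, dist_comm c, div_pow, dist_sq_Smap_Smap hjk] at hmedian
  rw [hmid] at hheight
  linarith

lemma le_sum_dist_sq_Smap (i : Fin 3) (x c : E2) :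
    4 / 9 + 9 / 4 * (bary i x / 3 + 2 / 9 - bary i c) ^ 2 ≤ ∑ j, dist (Smap j x) c ^ 2 := by
  obtain ⟨d, hd⟩ : ∃ d : Fin 3 → ℝ, ∀ k, d k = bary k x / 3 + 2 / 9 - bary k c :=
    ⟨_, fun _ ↦ rfl⟩
  have hsum : ∑ k, d k = 0 := by
    simp only [hd, Finset.sum_sub_distrib, Finset.sum_add_distrib, ← Finset.sum_div, sum_bary]
    norm_num
  have hsq := card_mul_sq_le_of_sum_eq_zero hsum i
  have hdist : ∑ j, dist (Smap j x) c ^ 2 = 3 / 2 * ∑ k, d k ^ 2 + 4 / 9 := by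
    have hshift (j k : Fin 3) :
        bary k (Smap j x) - bary k c = d k - 2 / 9 + if k = j then 2 / 3 else 0 := by
      rw [bary_Smap, hd]
      ring
    simp only [dist_sq_eq_sum_bary, hshift]
    simp [Fin.sum_univ_three]
    ring
  rw [Fintype.card_fin] at hsq
  rw [← hd i]
  push_cast at hsq
  linarith

end Triangle

/-! ### The R-measure -/

/-- `P` is the self-similar measure of the maps `Smap i` with equal weights; the R-measure is the
probability measure with this property. -/
def IsRMeasure (P : Measure E2) : Prop := P = (3 : ℝ≥0∞)⁻¹ • ∑ i, P.map (Smap i)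

namespace IsRMeasure

open Metric

variable {P : Measure E2} (hP : IsRMeasure P)

include hP

lemma measure_eq {s : Set E2} (hs : MeasurableSet s) :
    P s = (3 : ℝ≥0∞)⁻¹ * ∑ i, P (Smap i ⁻¹' s) := by
  conv_lhs => rw [hP]
  simp [Measure.map_apply (continuous_Smap _).measurable hs]

section Finite

variable [IsFiniteMeasure P]

lemma ae_mem_Tri : ∀ᵐ x ∂P, x ∈ Tri := by
  have hbary (i : Fin 3) : ∀ᵐ x ∂P, 0 ≤ bary i x := by
    refine ae_nonneg_of_measure_lt_le_measure_lt_mul (continuous_bary i).measurable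
      (by norm_num : (1 : ℝ) < 3) fun t _ ↦ ?_
    have hsub (j : Fin 3) : Smap j ⁻¹' {x | bary i x < t} ⊆ {x | bary i x < 3 * t} := by
      intro x hx
      simp only [Set.mem_preimage, Set.mem_ofPred_eq, bary_Smap] at hx ⊢
      split_ifs at hx <;> linarith
    rw [hP.measure_eq (measurableSet_lt (continuous_bary i).measurable measurable_const)]
    calc (3 : ℝ≥0∞)⁻¹ * ∑ j, P (Smap j ⁻¹' {x | bary i x < t})
        ≤ (3 : ℝ≥0∞)⁻¹ * ∑ _j : Fin 3, P {x | bary i x < 3 * t} := by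
          gcongr
          exact hsub _
      _ = P {x | bary i x < 3 * t} := by
          rw [Finset.sum_const, Finset.card_univ, Fintype.card_fin, nsmul_eq_mul, Nat.cast_ofNat,
            ENNReal.inv_mul_cancel_left (by simp) (by simp)]
  filter_upwards [ae_all_iff.2 hbary] with x hx using mem_Tri_iff.2 hx

lemma integrable {f : E2 → ℝ} (hf : Continuous f) : Integrable f P :=
  integrable_of_continuous_of_ae_mem_isCompact isCompact_Tri hP.ae_mem_Tri hf

lemma integral_mono {f g : E2 → ℝ} (hf : Continuous f) (hg : Continuous g)
    (h : ∀ x ∈ Tri, f x ≤ g x) : ∫ x, f x ∂P ≤ ∫ x, g x ∂P :=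
  integral_mono_ae (hP.integrable hf) (hP.integrable hg) (hP.ae_mem_Tri.mono h)

lemma integral_eq {f : E2 → ℝ} (hf : Continuous f) :
    ∫ x, f x ∂P = (∑ i, ∫ x, f (Smap i x) ∂P) / 3 := by
  have hmap (i : Fin 3) : ∫ x, f x ∂P.map (Smap i) = ∫ x, f (Smap i x) ∂P :=
    integral_map (continuous_Smap i).aemeasurable hf.aestronglyMeasurable
  have hint (i : Fin 3) : Integrable f (P.map (Smap i)) :=
    (integrable_map_measure hf.aestronglyMeasurable (continuous_Smap i).aemeasurable).2
      (hP.integrable (hf.comp (continuous_Smap i)))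
  conv_lhs => rw [hP]
  rw [integral_smul_measure, integral_finsetSum_measure fun i _ ↦ hint i]
  simp only [hmap, ENNReal.toReal_inv, ENNReal.toReal_ofNat, smul_eq_mul]
  ring

lemma distortion_eq {s : Set E2} (hs : s.Nonempty) :
    distortion P s = (∑ i, distortion P (Smap i ⁻¹' s)) / 27 := by
  rw [distortion, hP.integral_eq (continuous_infDist_sq s)]
  simp only [infDist_Smap_sq _ hs, integral_div, ← Finset.sum_div, distortion]
  ring

lemma distortion_anti {s t : Set E2} (hs : s.Nonempty) (hst : s ⊆ t) :
    distortion P t ≤ distortion P s :=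
  hP.integral_mono (continuous_infDist_sq t) (continuous_infDist_sq s) fun _ _ ↦
    pow_le_pow_left₀ infDist_nonneg (infDist_le_infDist_of_subset hst hs) 2

lemma hasQuantizer_sum {k : Fin 3 → ℕ} {v : Fin 3 → ℝ} (h : ∀ i, HasQuantizer P (k i) (v i)) :
    HasQuantizer P (∑ i, k i) ((∑ i, v i) / 27) := by
  choose s hfin hne hcard hdist using h
  have hunion_ne : (⋃ i, Smap i '' s i).Nonempty :=
    ((hne 0).image _).mono (Set.subset_iUnion (fun i ↦ Smap i '' s i) 0)
  refine ⟨⋃ i, Smap i '' s i, Set.finite_iUnion fun i ↦ (hfin i).image _, hunion_ne, ?_, ?_⟩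
  · exact (Set.ncard_iUnion_le_of_fintype _).trans
      (Finset.sum_le_sum fun i _ ↦ (Set.ncard_image_le (hfin i)).trans (hcard i))
  · rw [hP.distortion_eq hunion_ne]
    gcongr with i
    refine (hP.distortion_anti (hne i) ?_).trans (hdist i)
    exact Set.image_subset_iff.1 (Set.subset_iUnion (fun j ↦ Smap j '' s j) i)

end Finite

variable [IsProbabilityMeasure P]

lemma integral_bary (i : Fin 3) : ∫ x, bary i x ∂P = 1 / 3 := by
  have hselfsim := hP.integral_eq (continuous_bary i)
  have hpiece (j : Fin 3) :
      ∫ x, bary i (Smap j x) ∂P = (∫ x, bary i x ∂P) / 3 + if i = j then 2 / 3 else 0 := by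
    simp only [bary_Smap]
    rw [integral_add (hP.integrable (by fun_prop)) (integrable_const _), integral_div]
    simp
  simp only [hpiece, Finset.sum_add_distrib, Finset.sum_ite_eq, Finset.mem_univ, if_true,
    Finset.sum_const, Finset.card_univ, Fintype.card_fin, nsmul_eq_mul] at hselfsim
  push_cast at hselfsim
  linarith

lemma integral_quadratic_bary (i : Fin 3) (a b c : ℝ) :
    ∫ x, (a * bary i x ^ 2 + b * bary i x + c) ∂P =
      a * ∫ x, bary i x ^ 2 ∂P + b * (1 / 3) + c := by
  rw [integral_add (hP.integrable (by fun_prop)) (integrable_const _),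
    integral_add (hP.integrable (by fun_prop)) (hP.integrable (by fun_prop)),
    integral_const_mul, integral_const_mul, hP.integral_bary]
  simp

lemma integral_bary_sq (i : Fin 3) : ∫ x, bary i x ^ 2 ∂P = 2 / 9 := by
  have hselfsim := hP.integral_eq (f := fun x ↦ bary i x ^ 2) (by fun_prop)
  have hpiece (j : Fin 3) :
      ∫ x, bary i (Smap j x) ^ 2 ∂P =
        (∫ x, bary i x ^ 2 ∂P) / 9 + if i = j then 16 / 27 else 0 := by
    have hsq (x : E2) : bary i (Smap j x) ^ 2 =
        1 / 9 * bary i x ^ 2 + (if i = j then 4 / 9 else 0) * bary i x +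
          if i = j then 4 / 9 else 0 := by
      rw [bary_Smap]
      split_ifs <;> ring
    simp only [hsq, hP.integral_quadratic_bary]
    split_ifs <;> ring
  simp only [hpiece, Finset.sum_add_distrib, Finset.sum_ite_eq, Finset.mem_univ, if_true,
    Finset.sum_const, Finset.card_univ, Fintype.card_fin, nsmul_eq_mul] at hselfsim
  push_cast at hselfsim
  linarith

lemma le_integral_of_quadratic_bary_le {i : Fin 3} {f : E2 → ℝ} (hf : Continuous f) {a b c : ℝ}
    (h : ∀ x ∈ Tri, a * bary i x ^ 2 + b * bary i x + c ≤ f x) :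
    a * (2 / 9) + b * (1 / 3) + c ≤ ∫ x, f x ∂P := by
  rw [← hP.integral_bary_sq i, ← hP.integral_quadratic_bary]
  exact hP.integral_mono (by fun_prop) hf h

lemma le_integral_of_quadratic_bary_le_sum_Smap {i : Fin 3} {f : E2 → ℝ} (hf : Continuous f)
    {a b c : ℝ} (h : ∀ x ∈ Tri, a * bary i x ^ 2 + b * bary i x + c ≤ ∑ j, f (Smap j x)) :
    (a * (2 / 9) + b * (1 / 3) + c) / 3 ≤ ∫ x, f x ∂P := by
  rw [hP.integral_eq hf, ← integral_finsetSum _ fun j _ ↦ hP.integrable (by fun_prop)]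
  gcongr
  exact hP.le_integral_of_quadratic_bary_le (by fun_prop) h

lemma integral_dist_sq (p : E2) : ∫ x, dist x p ^ 2 ∂P = 1 / 6 + dist p triCenter ^ 2 := by
  have hcoord (i : Fin 3) :
      ∫ x, (bary i x - bary i p) ^ 2 ∂P = 1 / 9 + (bary i p - bary i triCenter) ^ 2 := by
    have hexpand (x : E2) : (bary i x - bary i p) ^ 2 =
        1 * bary i x ^ 2 + (-(2 * bary i p)) * bary i x + bary i p ^ 2 := by
      ring
    simp only [hexpand, hP.integral_quadratic_bary, hP.integral_bary_sq, bary_triCenter]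
    ring
  simp only [dist_sq_eq_sum_bary]
  rw [integral_div, integral_finsetSum _ fun i _ ↦ hP.integrable (by fun_prop)]
  simp only [hcoord, Finset.sum_add_distrib, Finset.sum_const, Finset.card_univ,
    Fintype.card_fin, nsmul_eq_mul]
  push_cast
  ring

lemma distortion_le {s : Set E2} {a : E2} (ha : a ∈ s) :
    distortion P s ≤ 1 / 6 + dist a triCenter ^ 2 := by
  rw [← hP.integral_dist_sq a]
  exact hP.integral_mono (continuous_infDist_sq s) (by fun_prop)
    fun x _ ↦ infDist_sq_le_dist_sq ha x

lemma hasQuantizer_one : HasQuantizer P 1 (1 / 6) := by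
  refine ⟨{triCenter}, Set.finite_singleton _, Set.singleton_nonempty _,
    (Set.ncard_singleton _).le, ?_⟩
  simpa using hP.distortion_le (Set.mem_singleton triCenter)

lemma hasQuantizer_three : HasQuantizer P 3 (1 / 54) := by
  refine (hP.hasQuantizer_sum fun _ ↦ hP.hasQuantizer_one).mono ?_ ?_ <;> norm_num

lemma distortion_preimage_Smap_le {s : Set E2} {a : E2} (ha : a ∈ s) (i : Fin 3) :
    distortion P (Smap i ⁻¹' s) ≤ 1 / 6 + 9 * dist a (Smap i triCenter) ^ 2 := by
  obtain ⟨b, rfl⟩ := (Smap_bijective i).surjective a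
  refine (hP.distortion_le (Set.mem_preimage.2 ha)).trans_eq ?_
  rw [dist_Smap]
  ring

lemma hasQuantizer_two : HasQuantizer P 2 (5 / 54) := by
  let m := midpoint ℝ (Smap 1 triCenter) (Smap 2 triCenter)
  let s : Set E2 := {Smap 0 triCenter, m}
  have h0 := hP.distortion_preimage_Smap_le (Set.mem_insert _ _ : Smap 0 triCenter ∈ s) 0
  have h1 := hP.distortion_preimage_Smap_le (Set.mem_insert_of_mem _ rfl : m ∈ s) 1
  have h2 := hP.distortion_preimage_Smap_le (Set.mem_insert_of_mem _ rfl : m ∈ s) 2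
  have hside : dist (Smap 1 triCenter) (Smap 2 triCenter) ^ 2 = 4 / 9 :=
    dist_sq_Smap_Smap (by decide) _
  refine ⟨s, Set.toFinite _, Set.insert_nonempty _ _, (Set.ncard_insert_le _ _).trans (by simp), ?_⟩
  rw [hP.distortion_eq (Set.insert_nonempty _ _), Fin.sum_univ_three]
  rw [dist_self] at h0
  rw [dist_midpoint_left, mul_pow, hside, Real.norm_ofNat] at h1
  rw [dist_midpoint_right, mul_pow, hside, Real.norm_ofNat] at h2
  linarith

end IsRMeasure

/-! ### Caps of a quantizer -/

section Cap

open Metric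

/-- The part of `s` above level `t` of the `i`-th barycentric coordinate, i.e. towards vertex `i`.
At level `1 / 2` the three caps of a subset of `Tri` are disjoint; after magnification by the
inverse of `Smap i` this becomes level `-1 / 2`. -/
def cap (i : Fin 3) (t : ℝ) (s : Set E2) : Set E2 := {a ∈ s | t < bary i a}

lemma cap_subset (i : Fin 3) (t : ℝ) (s : Set E2) : cap i t s ⊆ s := Set.sep_subset _ _

lemma cap_preimage_Smap (i : Fin 3) (t : ℝ) (s : Set E2) :
    cap i t (Smap i ⁻¹' s) = Smap i ⁻¹' cap i ((t + 2) / 3) s := by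
  ext a
  refine and_congr_right fun _ ↦ ?_
  rw [bary_Smap, if_pos rfl]
  constructor <;> intro h <;> linarith

lemma ncard_cap_preimage_Smap (i : Fin 3) (t : ℝ) (s : Set E2) :
    (cap i t (Smap i ⁻¹' s)).ncard = (cap i ((t + 2) / 3) s).ncard := by
  rw [cap_preimage_Smap]
  exact Set.ncard_preimage_of_injective_subset_range (Smap_bijective i).injective
    (by simp [(Smap_bijective i).surjective.range_eq])

lemma sum_ncard_cap_le {t : ℝ} (ht : 1 / 2 ≤ t) {s : Set E2} (hfin : s.Finite) (hs : s ⊆ Tri) :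
    ∑ i, (cap i t s).ncard ≤ s.ncard := by
  have hcap_fin (i : Fin 3) : (cap i t s).Finite := hfin.subset (cap_subset _ _ _)
  have hdisj : Pairwise (Function.onFun Disjoint fun i ↦ cap i t s) := by
    refine fun i j hij ↦ Set.disjoint_left.2 fun a ⟨ha, hai⟩ ⟨_, haj⟩ ↦ ?_
    have hle : ∑ k ∈ {i, j}, bary k a ≤ ∑ k, bary k a :=
      Finset.sum_le_univ_sum_of_nonneg (mem_Tri_iff.1 (hs ha))
    rw [Finset.sum_pair hij, sum_bary] at hle
    linarith
  rw [← finsum_eq_sum_of_fintype, ← Set.ncard_iUnion_of_finite hcap_fin hdisj]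
  exact Set.ncard_le_ncard (Set.iUnion_subset fun i ↦ cap_subset _ _ _) hfin

lemma exists_mem_cap_infDist_eq_or_le {s : Set E2} (hfin : s.Finite) (hne : s.Nonempty) {i : Fin 3}
    {t : ℝ} {x : E2} (hx : t ≤ bary i x) :
    (∃ c ∈ cap i t s, infDist x s = dist x c) ∨
      3 / 4 * (bary i x - t) ^ 2 ≤ infDist x s ^ 2 := by
  obtain ⟨a, ha, hxa⟩ := hfin.isCompact.exists_infDist_eq_dist hne x
  rcases lt_or_ge t (bary i a) with hat | hat
  · exact Or.inl ⟨a, ⟨ha, hat⟩, hxa⟩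
  · right
    rw [hxa]
    refine le_trans ?_ (bary_sub_sq_le_dist_sq i x a)
    gcongr

lemma infDist_sq_eq_dist_sq_or_le {s : Set E2} (hfin : s.Finite) (hne : s.Nonempty) {i : Fin 3}
    {t : ℝ} {c x : E2} (hcap : cap i t s = {c}) (hx : t ≤ bary i x) :
    infDist x s ^ 2 = dist x c ^ 2 ∨ 3 / 4 * (bary i x - t) ^ 2 ≤ infDist x s ^ 2 := by
  refine (exists_mem_cap_infDist_eq_or_le hfin hne hx).imp_left ?_
  rw [hcap]
  rintro ⟨_, rfl, h⟩
  rw [h]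

variable {i : Fin 3} {s : Set E2} (hfin : s.Finite) (hne : s.Nonempty) {x : E2} (hx : x ∈ Tri)

include hfin hne hx

lemma three_div_sixteen_le_sum_infDist_Smap_sq (hcap : (cap i (-1 / 2) s).ncard ≤ 2) :
    3 / 16 ≤ ∑ j, infDist (Smap j x) s ^ 2 := by
  have hnonneg (u : Finset (Fin 3)) :
      ∑ j ∈ u, infDist (Smap j x) s ^ 2 ≤ ∑ j, infDist (Smap j x) s ^ 2 :=
    Finset.sum_le_univ_sum_of_nonneg fun j ↦ sq_nonneg _
  by_cases hfar : ∃ j, 3 / 16 ≤ infDist (Smap j x) s ^ 2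
  · obtain ⟨j, hj⟩ := hfar
    exact hj.trans (by simpa using hnonneg {j})
  · have hnear (j : Fin 3) : ∃ c ∈ cap i (-1 / 2) s, infDist (Smap j x) s = dist (Smap j x) c := by
      have hbary := mem_Tri_iff.1 hx i
      have hle := bary_div_three_le_bary_Smap i j x
      refine (exists_mem_cap_infDist_eq_or_le hfin hne (by linarith)).resolve_right fun h ↦ ?_
      exact hfar ⟨j, le_trans (by nlinarith) h⟩
    choose c hc hdist using hnear
    obtain ⟨j, -, k, -, hjk, hshare⟩ := Set.exists_ne_map_eq_of_ncard_lt_of_maps_to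
      (s := Set.univ) (f := c) (by simpa [Set.ncard_univ] using Nat.lt_succ_of_le hcap)
      (fun j _ ↦ hc j) (hfin.subset (cap_subset _ _ _))
    have hpair := le_dist_sq_add_dist_sq_Smap hjk i x (c j)
    have hsum := hnonneg {j, k}
    rw [Finset.sum_pair hjk, hdist j, hdist k, ← hshare] at hsum
    refine le_trans ?_ hsum
    nlinarith

variable {c : E2} (hcap : cap i (-1 / 2) s = {c})

include hcap

lemma infDist_Smap_sq_eq_dist_sq_or_le (j : Fin 3) :
    infDist (Smap j x) s ^ 2 = dist (Smap j x) c ^ 2 ∨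
      3 / 4 * (bary i x / 3 + 1 / 2) ^ 2 ≤ infDist (Smap j x) s ^ 2 := by
  have hbary := mem_Tri_iff.1 hx i
  have hle := bary_div_three_le_bary_Smap i j x
  refine (infDist_sq_eq_dist_sq_or_le hfin hne hcap (by linarith)).imp_right fun h ↦ le_trans ?_ h
  gcongr
  linarith

lemma linear_le_sum_infDist_Smap_sq_of_cap_eq_singleton :
    1 / 16 * bary i x + 3 / 8 ≤ ∑ j, infDist (Smap j x) s ^ 2 := by
  have hbary := mem_Tri_iff.1 hx i
  have hbary_one := bary_le_one hx i
  have hnear_or_far (j : Fin 3) : infDist (Smap j x) s ^ 2 = dist (Smap j x) c ^ 2 ∨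
      3 / 16 + bary i x / 4 ≤ infDist (Smap j x) s ^ 2 :=
    (infDist_Smap_sq_eq_dist_sq_or_le hfin hne hx hcap j).imp_right fun h ↦ by nlinarith
  have hnonneg (j : Fin 3) : 0 ≤ infDist (Smap j x) s ^ 2 := sq_nonneg _
  have hpair {j k : Fin 3} (hjk : j ≠ k) :
      2 / 9 ≤ dist (Smap j x) c ^ 2 + dist (Smap k x) c ^ 2 :=
    (le_add_of_nonneg_right (by positivity)).trans (le_dist_sq_add_dist_sq_Smap hjk i x c)
  have htriple : 4 / 9 ≤ ∑ j, dist (Smap j x) c ^ 2 :=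
    (le_add_of_nonneg_right (by positivity)).trans (le_sum_dist_sq_Smap i x c)
  rw [Fin.sum_univ_three] at htriple ⊢
  rcases hnear_or_far 0 with h0 | h0 <;> rcases hnear_or_far 1 with h1 | h1 <;>
    rcases hnear_or_far 2 with h2 | h2 <;>
  linarith [hnonneg 0, hnonneg 1, hnonneg 2, hpair (show (0 : Fin 3) ≠ 1 by decide),
    hpair (show (0 : Fin 3) ≠ 2 by decide), hpair (show (1 : Fin 3) ≠ 2 by decide)]

/-- The extremal case is that `c` is nearest to all three points `Smap j x`; it dictates the
quadratic polynomial. -/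
lemma quadratic_le_sum_infDist_Smap_sq_of_cap_eq_singleton (hc : bary i c ≤ 0) :
    1 / 4 * bary i x ^ 2 + 1 / 3 * bary i x + 5 / 9 ≤ ∑ j, infDist (Smap j x) s ^ 2 := by
  obtain ⟨j, k, hij, hik, hsum⟩ := exists_ne_ne_sum_eq (M := ℝ) i
  have hbary := mem_Tri_iff.1 hx i
  have hbary_sq : bary i x ^ 2 ≤ bary i x := by nlinarith [bary_le_one hx i]
  have htop : bary i (Smap i x) = bary i x / 3 + 2 / 3 := by rw [bary_Smap, if_pos rfl]
  have htriple : 4 / 9 + 9 / 4 * (bary i x / 3 + 2 / 9) ^ 2 ≤ ∑ l, dist (Smap l x) c ^ 2 := by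
    refine le_trans ?_ (le_sum_dist_sq_Smap i x c)
    gcongr
    linarith
  have hpair {l : Fin 3} (hil : i ≠ l) : 2 / 9 + 3 / 2 * (bary i x / 3 + 1 / 3) ^ 2 ≤
      dist (Smap i x) c ^ 2 + dist (Smap l x) c ^ 2 := by
    refine le_trans ?_ (le_dist_sq_add_dist_sq_Smap hil i x c)
    rw [htop, bary_Smap, if_neg hil]
    gcongr
    linarith
  have htop_near_or_far : infDist (Smap i x) s ^ 2 = dist (Smap i x) c ^ 2 ∨
      3 / 4 * (bary i x / 3 + 2 / 3 - -1 / 2) ^ 2 ≤ infDist (Smap i x) s ^ 2 := by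
    rw [← htop]
    exact infDist_sq_eq_dist_sq_or_le hfin hne hcap (by linarith)
  have hheight : 3 / 4 * (bary i x / 3 + 2 / 3) ^ 2 ≤ dist (Smap i x) c ^ 2 := by
    refine le_trans ?_ (bary_sub_sq_le_dist_sq i (Smap i x) c)
    rw [htop]
    gcongr
    linarith
  have hnear_or_far := infDist_Smap_sq_eq_dist_sq_or_le hfin hne hx hcap
  rw [hsum] at htriple ⊢
  rcases htop_near_or_far with hi | hi
  · rcases hnear_or_far j with hj | hj <;> rcases hnear_or_far k with hk | hk <;>
    linarith [hpair hij, hpair hik]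
  · linarith [sq_nonneg (infDist (Smap j x) s), sq_nonneg (infDist (Smap k x) s)]

end Cap

namespace IsRMeasure

variable {P : Measure E2} [IsProbabilityMeasure P] (hP : IsRMeasure P) {i : Fin 3} {s : Set E2}
  (hfin : s.Finite) (hne : s.Nonempty)

include hP hfin hne

lemma le_distortion_of_cap_eq_empty {t : ℝ} (ht : t ≤ 0) (hcap : cap i t s = ∅) :
    3 / 4 * t ^ 2 - t / 2 + 1 / 6 ≤ distortion P s := by
  refine le_trans (le_of_eq ?_) (hP.le_integral_of_quadratic_bary_le (i := i)
    (a := 3 / 4) (b := -(3 / 2) * t) (c := 3 / 4 * t ^ 2) (continuous_infDist_sq s) ?_)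
  · ring
  · intro x hx
    have hfar := (exists_mem_cap_infDist_eq_or_le hfin hne
      (ht.trans (mem_Tri_iff.1 hx i))).resolve_left (by simp [hcap])
    linarith

variable (i) in
lemma le_distortion_of_ncard_cap_le_two (hcap : (cap i (-1 / 2) s).ncard ≤ 2) :
    1 / 16 ≤ distortion P s := by
  refine le_trans (by norm_num) (hP.le_integral_of_quadratic_bary_le_sum_Smap (i := i)
    (a := 0) (b := 0) (c := 3 / 16) (continuous_infDist_sq s) fun x hx ↦ ?_)
  linarith [three_div_sixteen_le_sum_infDist_Smap_sq hfin hne hx hcap]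

variable {c : E2} (hcap : cap i (-1 / 2) s = {c})

include hcap

lemma le_distortion_of_cap_eq_singleton : 19 / 144 ≤ distortion P s := by
  refine le_trans (by norm_num) (hP.le_integral_of_quadratic_bary_le_sum_Smap (i := i)
    (a := 0) (b := 1 / 16) (c := 3 / 8) (continuous_infDist_sq s) fun x hx ↦ ?_)
  linarith [linear_le_sum_infDist_Smap_sq_of_cap_eq_singleton hfin hne hx hcap]

lemma le_distortion_of_cap_eq_singleton_of_bary_nonpos (hc : bary i c ≤ 0) :
    13 / 54 ≤ distortion P s := by
  refine le_trans (by norm_num) (hP.le_integral_of_quadratic_bary_le_sum_Smap (i := i)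
    (a := 1 / 4) (b := 1 / 3) (c := 5 / 9) (continuous_infDist_sq s) fun x hx ↦ ?_)
  exact quadratic_le_sum_infDist_Smap_sq_of_cap_eq_singleton hfin hne hx hcap hc

end IsRMeasure

/-! ### Redistributing the points of a quantizer -/

namespace IsRMeasure

variable {P : Measure E2} [IsProbabilityMeasure P] (hP : IsRMeasure P)

section Replacement

variable {i : Fin 3} {s : Set E2} (hfin : s.Finite) (hne : s.Nonempty)
  (hcap : (cap i (-1 / 2) s).Nonempty)

include hP hfin hne hcap

/-- `5 / 144 = 1 / 6 - 19 / 144` is what a single point needs. -/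
lemma hasQuantizer_ncard_cap :
    HasQuantizer P (cap i (-1 / 2) s).ncard (distortion P s + 5 / 144) := by
  have hpos : 1 ≤ (cap i (-1 / 2) s).ncard :=
    (Set.ncard_pos (hfin.subset (cap_subset _ _ _))).2 hcap
  obtain hone | htwo | hthree :
      (cap i (-1 / 2) s).ncard = 1 ∨ (cap i (-1 / 2) s).ncard = 2 ∨
        3 ≤ (cap i (-1 / 2) s).ncard := by omega
  · obtain ⟨c, hc⟩ := Set.ncard_eq_one.1 hone
    have hle := hP.le_distortion_of_cap_eq_singleton hfin hne hc
    exact hP.hasQuantizer_one.mono hone.ge (by linarith)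
  · have hle := hP.le_distortion_of_ncard_cap_le_two i hfin hne htwo.le
    exact hP.hasQuantizer_two.mono htwo.ge (by linarith)
  · have hle := distortion_nonneg P s
    exact hP.hasQuantizer_three.mono hthree (by linarith)

/-- `2 / 27 = 13 / 54 - 1 / 6` is what a single point allows. -/
lemma hasQuantizer_ncard_cap_of_bary_nonpos (hs : ∀ a ∈ s, bary i a ≤ 0) :
    HasQuantizer P (cap i (-1 / 2) s).ncard (distortion P s - 2 / 27) := by
  have hle : 1 / 6 ≤ distortion P s := by
    simpa using hP.le_distortion_of_cap_eq_empty hfin hne le_rfl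
      (Set.eq_empty_of_forall_notMem fun a ha ↦ (hs a ha.1).not_gt ha.2)
  have hpos : 1 ≤ (cap i (-1 / 2) s).ncard :=
    (Set.ncard_pos (hfin.subset (cap_subset _ _ _))).2 hcap
  rcases hpos.eq_or_lt with hone | htwo
  · obtain ⟨c, hc⟩ := Set.ncard_eq_one.1 hone.symm
    have hcs : c ∈ s := cap_subset i (-1 / 2) s (hc ▸ Set.mem_singleton c)
    have hle := hP.le_distortion_of_cap_eq_singleton_of_bary_nonpos hfin hne hc (hs c hcs)
    exact hP.hasQuantizer_one.mono hone.le (by linarith)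
  · exact hP.hasQuantizer_two.mono htwo (by linarith)

end Replacement

section Improvement

variable {n : ℕ} {s : Set E2} (hfin : s.Finite) (hne : s.Nonempty)

include hP hfin hne

lemma exists_hasQuantizer_lt_of_cap_eq_empty (hn : 3 ≤ n) {j : Fin 3}
    (hcap : cap j (-1 / 2) (Smap j ⁻¹' s) = ∅) : ∃ v < distortion P s, HasQuantizer P n v := by
  have hpiece := hP.le_distortion_of_cap_eq_empty (hfin.preimage (Smap_bijective j).injective.injOn)
    (hne.preimage (Smap_bijective j).surjective) (by norm_num) hcap
  have hle := Finset.single_le_sum (f := fun k ↦ distortion P (Smap k ⁻¹' s))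
    (fun k _ ↦ distortion_nonneg P _) (Finset.mem_univ j)
  refine ⟨1 / 54, ?_, hP.hasQuantizer_three.mono hn le_rfl⟩
  rw [hP.distortion_eq hne]
  linarith

/-- Piece `i` gains `2 / 27` on the scale of the pieces, more than twice the loss `5 / 144` of each
of the two other pieces. -/
lemma exists_hasQuantizer_lt_of_cap_nonempty (hcard : s.ncard ≤ n) (hs : s ⊆ Tri) {i : Fin 3}
    (hi : ∀ a ∈ s, bary i a ≤ 2 / 3)
    (hcap : ∀ j, (cap j (-1 / 2) (Smap j ⁻¹' s)).Nonempty) :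
    ∃ v < distortion P s, HasQuantizer P n v := by
  have hpre_fin (j : Fin 3) : (Smap j ⁻¹' s).Finite :=
    hfin.preimage (Smap_bijective j).injective.injOn
  have hpre_ne (j : Fin 3) : (Smap j ⁻¹' s).Nonempty :=
    hne.preimage (Smap_bijective j).surjective
  have hlow : ∀ a ∈ Smap i ⁻¹' s, bary i a ≤ 0 := by
    intro a ha
    have hle := hi _ ha
    rw [bary_Smap, if_pos rfl] at hle
    linarith
  have hpiece (j : Fin 3) : HasQuantizer P (cap j (-1 / 2) (Smap j ⁻¹' s)).ncard
      (distortion P (Smap j ⁻¹' s) + if j = i then -(2 / 27) else 5 / 144) := by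
    split_ifs with hji
    · subst hji
      exact hP.hasQuantizer_ncard_cap_of_bary_nonpos (hpre_fin j) (hpre_ne j) (hcap j) hlow
    · exact hP.hasQuantizer_ncard_cap (hpre_fin j) (hpre_ne j) (hcap j)
  have hbalance : ∑ j, (if j = i then -(2 / 27) else 5 / 144 : ℝ) < 0 := by
    obtain ⟨j, k, hij, hik, hsum⟩ := exists_ne_ne_sum_eq (M := ℝ) i
    rw [hsum, if_pos rfl, if_neg hij.symm, if_neg hik.symm]
    norm_num
  refine ⟨_, ?_, (hP.hasQuantizer_sum hpiece).mono ?_ le_rfl⟩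
  · rw [hP.distortion_eq hne, Finset.sum_add_distrib]
    linarith
  · simp only [ncard_cap_preimage_Smap]
    exact (sum_ncard_cap_le (by norm_num) hfin hs).trans hcard

lemma exists_hasQuantizer_lt (hn : 3 ≤ n) (hcard : s.ncard ≤ n) (hs : s ⊆ Tri) {i : Fin 3}
    (hi : ∀ a ∈ s, bary i a ≤ 2 / 3) : ∃ v < distortion P s, HasQuantizer P n v := by
  by_cases hempty : ∃ j, cap j (-1 / 2) (Smap j ⁻¹' s) = ∅
  · exact hP.exists_hasQuantizer_lt_of_cap_eq_empty hfin hne hn hempty.choose_spec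
  · push Not at hempty
    exact hP.exists_hasQuantizer_lt_of_cap_nonempty hfin hne hcard hs hi hempty

end Improvement

end IsRMeasure

/-! ### Optimal sets -/

lemma err_eq_ofReal_distortion {P : Measure E2} {s : Set E2} (hfin : s.Finite) (hne : s.Nonempty)
    (hint : Integrable (fun x ↦ Metric.infDist x s ^ 2) P) :
    err P s = ENNReal.ofReal (distortion P s) := by
  rw [err, distortion, ofReal_integral_eq_lintegral_ofReal hint
    (.of_forall fun _ ↦ sq_nonneg _)]
  refine lintegral_congr fun x ↦ le_antisymm ?_ (le_iInf₂ fun a ha ↦ ?_)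
  · obtain ⟨a, ha, hxa⟩ := hfin.isCompact.exists_infDist_eq_dist hne x
    rw [hxa, dist_eq_norm]
    exact iInf₂_le a ha
  · rw [← dist_eq_norm]
    exact ENNReal.ofReal_le_ofReal (infDist_sq_le_dist_sq ha x)

namespace IsOptimal

variable {P : Measure E2} {n : ℕ} {α : Set E2} (hα : IsOptimal P n α)

include hα

lemma err_le {s : Set E2} (hfin : s.Finite) (hcard : s.ncard ≤ n) : err P α ≤ err P s :=
  hα.2.2.trans_le (iInf₂_le s ⟨hfin, hcard⟩)

variable (hint : ∀ s : Set E2, Integrable (fun x ↦ Metric.infDist x s ^ 2) P)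

include hint

lemma nonempty [NeZero P] (hn : 1 ≤ n) : α.Nonempty := by
  refine Set.nonempty_iff_ne_empty.2 fun h ↦ ?_
  have hle := hα.err_le (Set.finite_singleton (0 : E2)) ((Set.ncard_singleton _).trans_le hn)
  rw [err_eq_ofReal_distortion (Set.finite_singleton _) (Set.singleton_nonempty _) (hint _), h,
    err] at hle
  simp [NeZero.ne] at hle

lemma distortion_le (hne : α.Nonempty) {v : ℝ} (h : HasQuantizer P n v) : distortion P α ≤ v := by
  obtain ⟨s, hfin, hs_ne, hcard, hs⟩ := h
  have hle := hα.err_le hfin hcard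
  rw [err_eq_ofReal_distortion hα.1 hne (hint _), err_eq_ofReal_distortion hfin hs_ne (hint _),
    ENNReal.ofReal_le_ofReal_iff (distortion_nonneg _ _)] at hle
  exact hle.trans hs

end IsOptimal

/-- If α is an optimal set of n-means for the R-measure P with n ≥ 3, then α meets each of
the basic triangles △_i = S_i(△), i ∈ {1,2,3}. -/
theorem stmt_6 (P : Measure E2) [IsProbabilityMeasure P]
    (hP : P = (3 : ℝ≥0∞)⁻¹ • (P.map S1 + P.map S2 + P.map S3))
    (n : ℕ) (hn : 3 ≤ n) (α : Set E2) (hα : IsOptimal P n α) :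
    ∀ i : Fin 3, (α ∩ Smap i '' Tri).Nonempty := by
  have hR : IsRMeasure P := by
    rw [IsRMeasure, Fin.sum_univ_three]
    exact hP
  have hint (s : Set E2) := hR.integrable (continuous_infDist_sq s)
  have hα_ne : α.Nonempty := hα.nonempty hint (by omega)
  have hopt (v : ℝ) (hv : HasQuantizer P n v) : distortion P α ≤ v := hα.distortion_le hint hα_ne hv
  obtain ⟨hne, hle⟩ := nonempty_inter_and_distortion_inter_le isCompact_Tri convex_Tri
    hR.ae_mem_Tri hα.1 hα_ne hα.2.1 hopt
  intro i
  by_contra hmiss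
  have hlow : ∀ a ∈ α ∩ Tri, bary i a ≤ 2 / 3 := fun a ha ↦
    le_of_not_ge fun h ↦ hmiss ⟨a, ha.1, mem_image_Smap_of_le_bary ha.2 h⟩
  obtain ⟨v, hv, hquant⟩ := hR.exists_hasQuantizer_lt (hα.1.subset Set.inter_subset_left) hne hn
    ((Set.ncard_le_ncard Set.inter_subset_left hα.1).trans hα.2.1) Set.inter_subset_right hlow
  exact (hopt v hquant).not_gt (hv.trans_le hle)

end
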